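/- Fix T > 0, matrices A ∈ ℝ^{n×n}, B ∈ ℝ^{n×p}, E_ℓ ∈ ℝ^{n×m_ℓ} (ℓ = 1,…,m), x₀ ∈ ℝⁿ, u₀ ∈ ℝᵖ, continuous demands v_ℓ : ℝ → ℝ^{m_ℓ} vanishing on (−∞,0], continuous hold functions ξ_{i,k} : ℝ → ℝᵖ, a constraint matrix C ∈ ℝ^{q×n} with rows C_z and right-hand side d ∈ ℝ^q, continuously differentiable sensitivities h_ℓ : ℝ → ℝ, and ε > 0. Define x̄₀(t) = exp(At)x₀ + ∫₀ᵗ exp(A(t−β))Bu₀ dβ, x̄ᵘ_{i,k}(t) = ∫₀ᵗ exp(A(t−β))Bξ_{i,k}(β) dβ, x̄ᵛ_ℓ(s) = ∫₀ˢ exp(A(s−β))E_ℓ v_ℓ(β) dβ (zero for s < 0), and x(t; τ, α) = x̄₀(t) + Σ_{k,i} α_{i,k} x̄ᵘ_{i,k}(t) + Σ_ℓ x̄ᵛ_ℓ(t−τ_ℓ). On an open set of parameters (τ, α) where −C_z x(t; τ, α) + d_z > 0 for all z and all t ∈ [0,T], the barrier-augmented cost J(τ, α) = Σ_ℓ h_ℓ(τ_ℓ)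 − Σ_z ∫₀ᵀ ε·log(−C_z x(t; τ, α) + d_z) dt is continuously differentiable, and its partial derivative with respect to τ_ℓ equals h_ℓ'(τ_ℓ) + Σ_z ∫₀ᵀ ε·(−C_z(A x̄ᵛ_ℓ(t−τ_ℓ) + E_ℓ v_ℓ(t−τ_ℓ)))/(−C_z x(t; τ, α) + d_z) dt. -/

import Mathlib

open Matrix MeasureTheory Set

/-- `x̄₀(t) = exp(At)·x₀ + ∫₀ᵗ exp(A(t−β))·B·u₀ dβ`. -/
noncomputable def xbar0 {n p : ℕ} (A : Matrix (Fin n) (Fin n) ℝ)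
    (B : Matrix (Fin n) (Fin p) ℝ) (x₀ : Fin n → ℝ) (u₀ : Fin p → ℝ) (t : ℝ) : Fin n → ℝ :=
  (NormedSpace.exp (t • A)).mulVec x₀ +
    ∫ β in (0:ℝ)..t, (NormedSpace.exp ((t - β) • A)).mulVec (B.mulVec u₀)

/-- `x̄ᵘ(t) = ∫₀ᵗ exp(A(t−β))·B·ξ(β) dβ`. -/
noncomputable def xbaru {n p : ℕ} (A : Matrix (Fin n) (Fin n) ℝ)
    (B : Matrix (Fin n) (Fin p) ℝ) (ξ : ℝ → Fin p → ℝ) (t : ℝ) : Fin n → ℝ :=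
  ∫ β in (0:ℝ)..t, (NormedSpace.exp ((t - β) • A)).mulVec (B.mulVec (ξ β))

/-- `x̄ᵛ(s) = ∫₀ˢ exp(A(s−β))·E·v(β) dβ`, extended by `0` for `s < 0`. -/
noncomputable def xbarv {n m : ℕ} (A : Matrix (Fin n) (Fin n) ℝ)
    (E : Matrix (Fin n) (Fin m) ℝ) (v : ℝ → Fin m → ℝ) (s : ℝ) : Fin n → ℝ :=
  if 0 ≤ s then
    ∫ β in (0:ℝ)..s, (NormedSpace.exp ((s - β) • A)).mulVec (E.mulVec (v β))
  else 0

/-- The parametrized state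
`x(t; τ, α) = x̄₀(t) + Σ_{i,k} α_{i,k} x̄ᵘ_{i,k}(t) + Σ_ℓ x̄ᵛ_ℓ(t−τ_ℓ)`. -/
noncomputable def xstate {n p m K : ℕ} (A : Matrix (Fin n) (Fin n) ℝ)
    (B : Matrix (Fin n) (Fin p) ℝ) (x₀ : Fin n → ℝ) (u₀ : Fin p → ℝ)
    (md : Fin m → ℕ) (E : ∀ ℓ, Matrix (Fin n) (Fin (md ℓ)) ℝ)
    (v : ∀ ℓ, ℝ → Fin (md ℓ) → ℝ) (ξ : Fin p → Fin K → ℝ → Fin p → ℝ)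
    (τ : Fin m → ℝ) (α : Fin p → Fin K → ℝ) (t : ℝ) : Fin n → ℝ :=
  xbar0 A B x₀ u₀ t + (∑ i, ∑ k, α i k • xbaru A B (ξ i k) t) +
    ∑ ℓ, xbarv A (E ℓ) (v ℓ) (t - τ ℓ)

/-- The barrier-augmented cost
`J(τ,α) = Σ_ℓ h_ℓ(τ_ℓ) − Σ_z ∫₀ᵀ ε log(−C_z x(t;τ,α) + d_z) dt`. -/
noncomputable def Jbarrier {n p m K q : ℕ} (T : ℝ) (A : Matrix (Fin n) (Fin n) ℝ)
    (B : Matrix (Fin n) (Fin p) ℝ) (x₀ : Fin n → ℝ) (u₀ : Fin p → ℝ)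
    (md : Fin m → ℕ) (E : ∀ ℓ, Matrix (Fin n) (Fin (md ℓ)) ℝ)
    (v : ∀ ℓ, ℝ → Fin (md ℓ) → ℝ) (ξ : Fin p → Fin K → ℝ → Fin p → ℝ)
    (C : Matrix (Fin q) (Fin n) ℝ) (d : Fin q → ℝ) (h : Fin m → ℝ → ℝ) (ε : ℝ)
    (τ : Fin m → ℝ) (α : Fin p → Fin K → ℝ) : ℝ :=
  (∑ ℓ, h ℓ (τ ℓ)) - ∑ z, ∫ t in (0:ℝ)..T,
    ε * Real.log (-(C z ⬝ᵥ xstate A B x₀ u₀ md E v ξ τ α t) + d z)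


open scoped Interval

theorem aux_param {P : Type*} [NormedAddCommGroup P] [NormedSpace ℝ P] [ProperSpace P]
    (T : ℝ) (hT : 0 < T) (Ω : Set P) (hΩ : IsOpen Ω) (G : P → ℝ → ℝ) (G' : P → ℝ → P →L[ℝ] ℝ)
    (hG : ContinuousOn (fun q : P × ℝ => G q.1 q.2) (Ω ×ˢ Icc 0 T))
    (hG' : ContinuousOn (fun q : P × ℝ => G' q.1 q.2) (Ω ×ˢ Icc 0 T))
    (hd : ∀ x ∈ Ω, ∀ t ∈ Icc (0:ℝ) T, HasFDerivAt (fun y => G y t) (G' x t) x) :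
    (∀ x ∈ Ω, IntervalIntegrable (G' x) volume 0 T) ∧
    (∀ x ∈ Ω, HasFDerivAt (fun y => ∫ t in (0:ℝ)..T, G y t) (∫ t in (0:ℝ)..T, G' x t) x) ∧
    ContinuousOn (fun y => ∫ t in (0:ℝ)..T, G' y t) Ω := by
  have hsub : Ι (0:ℝ) T ⊆ Icc 0 T := by
    rw [uIoc_of_le hT.le]; exact Ioc_subset_Icc_self
  have hGt : ∀ x ∈ Ω, ContinuousOn (G x) (Icc 0 T) := fun x hx =>
    hG.comp (f := fun t : ℝ => (x, t)) (by fun_prop) (fun t ht => ⟨hx, ht⟩)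
  have hGt' : ∀ x ∈ Ω, ContinuousOn (G' x) (Icc 0 T) := fun x hx =>
    hG'.comp (f := fun t : ℝ => (x, t)) (by fun_prop) (fun t ht => ⟨hx, ht⟩)
  have hmeas : ∀ x ∈ Ω, AEStronglyMeasurable (G x) (volume.restrict (Ι 0 T)) := fun x hx =>
    ((hGt x hx).mono hsub).aestronglyMeasurable measurableSet_uIoc
  have hmeas' : ∀ x ∈ Ω, AEStronglyMeasurable (G' x) (volume.restrict (Ι 0 T)) := fun x hx =>
    ((hGt' x hx).mono hsub).aestronglyMeasurable measurableSet_uIoc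
  have hbd : ∀ x ∈ Ω, ∃ s ∈ nhds x, s ⊆ Ω ∧ ∃ M : ℝ, ∀ y ∈ s, ∀ t ∈ Icc (0:ℝ) T, ‖G' y t‖ ≤ M := by
    intro x hx
    obtain ⟨r, hr, hrs⟩ := Metric.nhds_basis_closedBall.mem_iff.1 (hΩ.mem_nhds hx)
    have hc : IsCompact (Metric.closedBall x r ×ˢ Icc (0:ℝ) T) :=
      (isCompact_closedBall x r).prod isCompact_Icc
    obtain ⟨M, hM⟩ := hc.exists_bound_of_continuousOn (hG'.mono (prod_mono hrs subset_rfl))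
    exact ⟨_, Metric.closedBall_mem_nhds x hr, hrs, M, fun y hy t ht => hM (y, t) ⟨hy, ht⟩⟩
  refine ⟨fun x hx => ?_, fun x hx => ?_, fun x hx => ContinuousAt.continuousWithinAt ?_⟩
  · exact ContinuousOn.intervalIntegrable (by rw [uIcc_of_le hT.le]; exact hGt' x hx)
  · obtain ⟨s, hs, hsΩ, M, hM⟩ := hbd x hx
    refine intervalIntegral.hasFDerivAt_integral_of_dominated_of_fderiv_le (bound := fun _ => M)
      (F' := G') hs ?_ ?_ (hmeas' x hx) ?_ ?_ ?_
    · filter_upwards [hΩ.mem_nhds hx] with y hy using hmeas y hy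
    · exact ContinuousOn.intervalIntegrable (by rw [uIcc_of_le hT.le]; exact hGt x hx)
    · exact Filter.Eventually.of_forall fun t ht y hy => hM y hy t (hsub ht)
    · exact intervalIntegrable_const
    · exact Filter.Eventually.of_forall fun t ht y hy => hd y (hsΩ hy) t (hsub ht)
  · obtain ⟨s, hs, hsΩ, M, hM⟩ := hbd x hx
    refine intervalIntegral.continuousAt_of_dominated_interval (bound := fun _ => M) ?_ ?_ ?_ ?_
    · filter_upwards [hΩ.mem_nhds hx] with y hy using hmeas' y hy
    · filter_upwards [hs] with y hy
      exact Filter.Eventually.of_forall fun t ht => hM y hy t (hsub ht)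
    · exact intervalIntegrable_const
    · refine Filter.Eventually.of_forall fun t ht => ?_
      have h1 : ContinuousOn (fun y => G' y t) Ω :=
        hG'.comp (f := fun y : P => (y, t)) (by fun_prop) (fun y hy => ⟨hy, hsub ht⟩)
      exact h1.continuousAt (hΩ.mem_nhds hx)

theorem aux_log {m p K : ℕ} (T : ℝ) (hT : 0 < T) (ε : ℝ)
    (Ω : Set ((Fin m → ℝ) × (Fin p → Fin K → ℝ))) (hΩ : IsOpen Ω)
    (a : ℝ → ℝ) (b : Fin p → Fin K → ℝ → ℝ) (c c' : Fin m → ℝ → ℝ)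
    (ha : Continuous a) (hb : ∀ i k, Continuous (b i k))
    (hc : ∀ l s, HasDerivAt (c l) (c' l s) s) (hc' : ∀ l, Continuous (c' l))
    (F : (Fin m → ℝ) × (Fin p → Fin K → ℝ) → ℝ → ℝ)
    (hF : ∀ x t, F x t = a t + (∑ i, ∑ k, x.2 i k * b i k t) + ∑ l, c l (t - x.1 l))
    (hpos : ∀ x ∈ Ω, ∀ t ∈ Icc (0:ℝ) T, 0 < F x t) :
    ContDiffOn ℝ 1 (fun x => ∫ t in (0:ℝ)..T, ε * Real.log (F x t)) Ω ∧
    ∀ x ∈ Ω, ∀ l : Fin m, HasDerivAt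
      (fun s : ℝ => ∫ t in (0:ℝ)..T, ε * Real.log (F (Function.update x.1 l s, x.2) t))
      (-∫ t in (0:ℝ)..T, ε * c' l (t - x.1 l) / F x t) (x.1 l) := by
  obtain rfl : F = fun x t => a t + (∑ i, ∑ k, x.2 i k * b i k t) + ∑ l, c l (t - x.1 l) := by
    funext x t; exact hF x t
  clear hF
  set F : (Fin m → ℝ) × (Fin p → Fin K → ℝ) → ℝ → ℝ :=
    fun x t => a t + (∑ i, ∑ k, x.2 i k * b i k t) + ∑ l, c l (t - x.1 l) with hFdef
  have hcc : ∀ l, Continuous (c l) := fun l =>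
    continuous_iff_continuousAt.2 fun s => (hc l s).continuousAt
  let π1 : Fin m → (((Fin m → ℝ) × (Fin p → Fin K → ℝ)) →L[ℝ] ℝ) := fun l =>
    (ContinuousLinearMap.proj l).comp (ContinuousLinearMap.fst ℝ (Fin m → ℝ) (Fin p → Fin K → ℝ))
  let π2 : Fin p → Fin K → (((Fin m → ℝ) × (Fin p → Fin K → ℝ)) →L[ℝ] ℝ) := fun i k =>
    ((ContinuousLinearMap.proj (R := ℝ) (φ := fun _ : Fin K => ℝ) k).comp
      (ContinuousLinearMap.proj (R := ℝ) (φ := fun _ : Fin p => Fin K → ℝ) i)).comp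
      (ContinuousLinearMap.snd ℝ (Fin m → ℝ) (Fin p → Fin K → ℝ))
  let F' : ((Fin m → ℝ) × (Fin p → Fin K → ℝ)) → ℝ → (((Fin m → ℝ) × (Fin p → Fin K → ℝ)) →L[ℝ] ℝ) := fun x t =>
    (∑ i, ∑ k, b i k t • π2 i k) + ∑ l, c' l (t - x.1 l) • (-(π1 l))
  have hFd : ∀ (x : ((Fin m → ℝ) × (Fin p → Fin K → ℝ))) t, HasFDerivAt (fun y => F y t) (F' x t) x := by
    intro x t
    refine HasFDerivAt.add (HasFDerivAt.const_add _ (HasFDerivAt.fun_sum fun i _ =>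
      HasFDerivAt.fun_sum fun k _ => ?_)) (HasFDerivAt.fun_sum fun l _ => ?_)
    · exact (π2 i k).hasFDerivAt.mul_const (b i k t)
    · exact (hc l (t - x.1 l)).comp_hasFDerivAt x ((π1 l).hasFDerivAt.const_sub t)
  have hFc : Continuous (fun q : ((Fin m → ℝ) × (Fin p → Fin K → ℝ)) × ℝ => F q.1 q.2) := by
    simp only [hFdef]
    fun_prop
  have hFc' : Continuous (fun q : ((Fin m → ℝ) × (Fin p → Fin K → ℝ)) × ℝ => F' q.1 q.2) := by
    simp only [F']
    fun_prop
  have hne : ∀ q ∈ Ω ×ˢ Icc (0:ℝ) T, F q.1 q.2 ≠ 0 := fun q hq => (hpos q.1 hq.1 q.2 hq.2).ne'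
  obtain ⟨hi, hD, hC⟩ := aux_param T hT Ω hΩ (fun x t => ε * Real.log (F x t))
    (fun x t => ε • (F x t)⁻¹ • F' x t)
    (continuousOn_const.mul (hFc.continuousOn.log hne))
    (ContinuousOn.fun_smul continuousOn_const
      (ContinuousOn.fun_smul (ContinuousOn.fun_inv₀ hFc.continuousOn hne) hFc'.continuousOn))
    (fun x hx t ht => ((hFd x t).log (hpos x hx t ht).ne').const_mul ε)
  constructor
  · rw [show (1 : WithTop ℕ∞) = 0 + 1 from (zero_add 1).symm, contDiffOn_succ_iff_fderiv_of_isOpen hΩ]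
    refine ⟨fun x hx => (hD x hx).differentiableAt.differentiableWithinAt, by simp, ?_⟩
    rw [contDiffOn_zero]
    exact hC.congr fun x hx => (hD x hx).fderiv
  · intro x hx l
    have hu : HasDerivAt (fun s : ℝ => ((Function.update x.1 l s, x.2) : ((Fin m → ℝ) × (Fin p → Fin K → ℝ))))
        (Pi.single l 1, 0) (x.1 l) :=
      (hasDerivAt_update x.1 l (x.1 l)).prodMk (hasDerivAt_const _ _)
    have hx' : ((Function.update x.1 l (x.1 l), x.2) : ((Fin m → ℝ) × (Fin p → Fin K → ℝ))) = x := by simp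
    have key := HasFDerivAt.comp_hasDerivAt (x.1 l) (by rw [hx']; exact hD x hx) hu
    refine key.congr_deriv ?_
    rw [ContinuousLinearMap.intervalIntegral_apply (hi x hx), ← intervalIntegral.integral_neg]
    refine intervalIntegral.integral_congr fun t _ => ?_
    simp [F', π1, π2, Pi.single_apply]
    ring

section Mat
open scoped Matrix.Norms.Operator

theorem aux_exp_deriv {n : ℕ} (A : Matrix (Fin n) (Fin n) ℝ) (s : ℝ) (i j : Fin n) :
    HasDerivAt (fun u : ℝ => NormedSpace.exp (u • A) i j) ((A * NormedSpace.exp (s • A)) i j) s := by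
  have h := hasDerivAt_exp_smul_const' (𝕂 := ℝ) A s
  have h2 := hasDerivAt_pi.1 h i
  exact hasDerivAt_pi.1 h2 j

theorem aux_exp_cont {n : ℕ} (A : Matrix (Fin n) (Fin n) ℝ) :
    Continuous (fun u : ℝ => NormedSpace.exp (u • A)) := by
  exact NormedSpace.exp_continuous.comp (by fun_prop)

end Mat

theorem aux_conv {n : ℕ} (A : Matrix (Fin n) (Fin n) ℝ) (w : ℝ → Fin n → ℝ) (hw : Continuous w)
    (s : ℝ) :
    HasDerivAt (fun s => ∫ β in (0:ℝ)..s, (NormedSpace.exp ((s - β) • A)).mulVec (w β))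
      (A.mulVec (∫ β in (0:ℝ)..s, (NormedSpace.exp ((s - β) • A)).mulVec (w β)) + w s) s := by
  have hg : Continuous (fun β : ℝ => (NormedSpace.exp ((-β) • A)).mulVec (w β)) :=
    ((aux_exp_cont A).comp continuous_neg).matrix_mulVec hw
  have heq : ∀ s, (∫ β in (0:ℝ)..s, (NormedSpace.exp ((s - β) • A)).mulVec (w β)) =
      (NormedSpace.exp (s • A)).mulVec
        (∫ β in (0:ℝ)..s, (NormedSpace.exp ((-β) • A)).mulVec (w β)) := by
    intro s
    have := ContinuousLinearMap.intervalIntegral_comp_comm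
      (LinearMap.toContinuousLinearMap (Matrix.mulVecLin (NormedSpace.exp (s • A))))
      (hg.intervalIntegrable (μ := volume) 0 s)
    simp only [LinearMap.coe_toContinuousLinearMap', Matrix.mulVecLin_apply] at this
    rw [← this]
    refine intervalIntegral.integral_congr fun β _ => ?_
    simp only [Matrix.mulVec_mulVec]
    rw [← Matrix.exp_add_of_commute, ← add_smul, sub_eq_add_neg]
    exact ((Commute.refl A).smul_left s).smul_right (-β)
  simp only [heq]
  have hI : HasDerivAt (fun s => ∫ β in (0:ℝ)..s, (NormedSpace.exp ((-β) • A)).mulVec (w β))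
      ((NormedSpace.exp ((-s) • A)).mulVec (w s)) s :=
    intervalIntegral.integral_hasDerivAt_right (hg.intervalIntegrable 0 s)
      (hg.stronglyMeasurableAtFilter _ _) hg.continuousAt
  have hlast : w s = (NormedSpace.exp (s • A)).mulVec
      ((NormedSpace.exp ((-s) • A)).mulVec (w s)) := by
    rw [Matrix.mulVec_mulVec, ← Matrix.exp_add_of_commute, ← add_smul]
    · simp
    · exact ((Commute.refl A).smul_left s).smul_right (-s)
  have : A.mulVec ((NormedSpace.exp (s • A)).mulVec
        (∫ β in (0:ℝ)..s, (NormedSpace.exp ((-β) • A)).mulVec (w β))) + w s =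
      (A * NormedSpace.exp (s • A)).mulVec
        (∫ β in (0:ℝ)..s, (NormedSpace.exp ((-β) • A)).mulVec (w β)) +
      (NormedSpace.exp (s • A)).mulVec ((NormedSpace.exp ((-s) • A)).mulVec (w s)) := by
    rw [← hlast, Matrix.mulVec_mulVec]
  rw [this, hasDerivAt_pi]
  intro i
  simp only [Matrix.mulVec, dotProduct, Pi.add_apply]
  rw [← Finset.sum_add_distrib]
  refine HasDerivAt.fun_sum fun j _ => ?_
  exact (aux_exp_deriv A s i j).mul (hasDerivAt_pi.1 hI j)

theorem aux_xbarv {n m : ℕ} (A : Matrix (Fin n) (Fin n) ℝ)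
    (E : Matrix (Fin n) (Fin m) ℝ) (v : ℝ → Fin m → ℝ) (hv0 : ∀ s ≤ (0:ℝ), v s = 0) :
    xbarv A E v = fun s => ∫ β in (0:ℝ)..s, (NormedSpace.exp ((s - β) • A)).mulVec (E.mulVec (v β)) := by
  funext s
  unfold xbarv
  split_ifs with h
  · rfl
  · symm
    rw [intervalIntegral.integral_congr (g := fun _ => 0)]
    · simp
    · intro β hβ
      rw [uIcc_of_ge (not_le.1 h).le] at hβ
      simp [hv0 β hβ.2]

theorem aux_conv_cont {n : ℕ} (A : Matrix (Fin n) (Fin n) ℝ) (w : ℝ → Fin n → ℝ)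
    (hw : Continuous w) :
    Continuous (fun s : ℝ => ∫ β in (0:ℝ)..s, (NormedSpace.exp ((s - β) • A)).mulVec (w β)) :=
  continuous_iff_continuousAt.2 fun s => (aux_conv A w hw s).continuousAt

/-- Lemma 1 (τ-gradient): on an open set of parameters where the state
constraints are strictly feasible, the barrier-augmented cost `J` is
continuously differentiable, and
`∂J/∂τ_ℓ = h_ℓ'(τ_ℓ) + Σ_z ∫₀ᵀ ε (−C_z(A x̄ᵛ_ℓ(t−τ_ℓ) + E_ℓ v_ℓ(t−τ_ℓ)))/(−C_z x(t;τ,α) + d_z) dt`. -/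
theorem barrier_cost_tau_gradient {n p m K q : ℕ} (T : ℝ) (hT : 0 < T)
    (A : Matrix (Fin n) (Fin n) ℝ) (B : Matrix (Fin n) (Fin p) ℝ)
    (x₀ : Fin n → ℝ) (u₀ : Fin p → ℝ)
    (md : Fin m → ℕ) (E : ∀ ℓ, Matrix (Fin n) (Fin (md ℓ)) ℝ)
    (v : ∀ ℓ, ℝ → Fin (md ℓ) → ℝ) (hv : ∀ ℓ, Continuous (v ℓ))
    (hv0 : ∀ ℓ, ∀ s ≤ (0:ℝ), v ℓ s = 0)
    (ξ : Fin p → Fin K → ℝ → Fin p → ℝ) (hξ : ∀ i k, Continuous (ξ i k))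
    (C : Matrix (Fin q) (Fin n) ℝ) (d : Fin q → ℝ)
    (h : Fin m → ℝ → ℝ) (hh : ∀ ℓ, ContDiff ℝ 1 (h ℓ))
    (ε : ℝ) (hε : 0 < ε)
    (Ω : Set ((Fin m → ℝ) × (Fin p → Fin K → ℝ))) (hΩ : IsOpen Ω)
    (hfeas : ∀ pr ∈ Ω, ∀ z, ∀ t ∈ Set.Icc (0:ℝ) T,
      0 < -(C z ⬝ᵥ xstate A B x₀ u₀ md E v ξ pr.1 pr.2 t) + d z) :
    ContDiffOn ℝ 1
      (fun pr : (Fin m → ℝ) × (Fin p → Fin K → ℝ) =>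
        Jbarrier T A B x₀ u₀ md E v ξ C d h ε pr.1 pr.2) Ω ∧
    ∀ pr ∈ Ω, ∀ ℓ : Fin m,
      HasDerivAt
        (fun s : ℝ => Jbarrier T A B x₀ u₀ md E v ξ C d h ε (Function.update pr.1 ℓ s) pr.2)
        (deriv (h ℓ) (pr.1 ℓ) + ∑ z, ∫ t in (0:ℝ)..T,
          ε * (-(C z ⬝ᵥ (A.mulVec (xbarv A (E ℓ) (v ℓ) (t - pr.1 ℓ)) +
                (E ℓ).mulVec (v ℓ (t - pr.1 ℓ)))))
            / (-(C z ⬝ᵥ xstate A B x₀ u₀ md E v ξ pr.1 pr.2 t) + d z))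
        (pr.1 ℓ) := by
  have hV : ∀ ℓ s, HasDerivAt (xbarv A (E ℓ) (v ℓ))
      (A.mulVec (xbarv A (E ℓ) (v ℓ) s) + (E ℓ).mulVec (v ℓ s)) s := by
    intro ℓ s
    rw [aux_xbarv A (E ℓ) (v ℓ) (hv0 ℓ)]
    exact aux_conv A _ (continuous_const.matrix_mulVec (hv ℓ)) s
  have hVc : ∀ ℓ, Continuous (xbarv A (E ℓ) (v ℓ)) := fun ℓ =>
    continuous_iff_continuousAt.2 fun s => (hV ℓ s).continuousAt
  have hU : ∀ i k, Continuous (xbaru A B (ξ i k)) := fun i k =>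
    aux_conv_cont A _ (continuous_const.matrix_mulVec (hξ i k))
  have h0 : Continuous (xbar0 A B x₀ u₀) :=
    ((aux_exp_cont A).matrix_mulVec continuous_const).add
      (aux_conv_cont A (fun _ => B.mulVec u₀) continuous_const)
  have key := fun z => aux_log T hT ε Ω hΩ (fun t => -(C z ⬝ᵥ xbar0 A B x₀ u₀ t) + d z)
    (fun i k t => -(C z ⬝ᵥ xbaru A B (ξ i k) t))
    (fun ℓ s => -(C z ⬝ᵥ xbarv A (E ℓ) (v ℓ) s))
    (fun ℓ s => -(C z ⬝ᵥ (A.mulVec (xbarv A (E ℓ) (v ℓ) s) + (E ℓ).mulVec (v ℓ s))))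
    ((continuous_const.dotProduct h0).neg.add continuous_const)
    (fun i k => (continuous_const.dotProduct (hU i k)).neg)
    (fun ℓ s => by
      refine HasDerivAt.neg ?_
      simp only [dotProduct]
      exact HasDerivAt.fun_sum fun j _ => (hasDerivAt_pi.1 (hV ℓ s) j).const_mul _)
    (fun ℓ => (continuous_const.dotProduct ((continuous_const.matrix_mulVec (hVc ℓ)).add
      (continuous_const.matrix_mulVec (hv ℓ)))).neg)
    (fun x t => -(C z ⬝ᵥ xstate A B x₀ u₀ md E v ξ x.1 x.2 t) + d z)
    (fun x t => by
      simp only [xstate, dotProduct_add, dotProduct_sum, dotProduct_smul, smul_eq_mul, mul_neg,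
        Finset.sum_neg_distrib]
      ring)
    (fun x hx t ht => hfeas x hx z t ht)
  constructor
  · unfold Jbarrier
    refine ContDiffOn.sub (ContDiff.contDiffOn ?_) (ContDiffOn.sum fun z _ => (key z).1)
    exact ContDiff.sum fun ℓ _ => (hh ℓ).comp (by fun_prop)
  · intro pr hpr ℓ
    unfold Jbarrier
    have h1 : HasDerivAt (fun s : ℝ => ∑ l, h l (Function.update pr.1 ℓ s l))
        (deriv (h ℓ) (pr.1 ℓ)) (pr.1 ℓ) := by
      have : ∀ l, HasDerivAt (fun s : ℝ => h l (Function.update pr.1 ℓ s l))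
          (if l = ℓ then deriv (h ℓ) (pr.1 ℓ) else 0) (pr.1 ℓ) := by
        intro l
        by_cases hl : l = ℓ
        · subst hl
          simpa using ((hh l).differentiable (by simp) (pr.1 l)).hasDerivAt
        · simpa [hl] using hasDerivAt_const (pr.1 ℓ) (h l (pr.1 l))
      simpa using HasDerivAt.fun_sum (u := Finset.univ) fun l _ => this l
    have h2 := HasDerivAt.fun_sum (u := Finset.univ) fun z _ => (key z).2 pr hpr ℓ
    refine (h1.sub h2).congr_deriv ?_
    simp [Finset.sum_neg_distrib]
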